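/- arXiv:1608.02393 — 3 statements merged into one kernel-verified Lean document; each statement's English description precedes it below -/
import Mathlib

section
/- Let X be a metric space satisfying assumptions (A) and let Ω ⊊ X be a bounded domain satisfying the bounded turning condition. Suppose {E_k} is a chain in Ω whose members E_k are subdomains (open connected subsets) of Ω, and let (x_n) be a sequence of points of Ω converging in the metric of X to a point x belonging to the impression ⋂_k closure(E_k). Then for every k there exists n_k such that x_n ∈ E_k for all n > n_k. -/
open Set Metric Filter Bornology
open scoped ENNReal Topology

noncomputable section

/-- A metric space is doubling if there is `N` such that every ball of radius `r`
can be covered by at most `N` balls of radius `r/2`. -/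
def DoublingSpace (X : Type*) [MetricSpace X] : Prop :=
  ∃ N : ℕ, ∀ (x : X) (r : ℝ), ∃ t : Finset X,
    t.card ≤ N ∧ Metric.ball x r ⊆ ⋃ y ∈ t, Metric.ball y (r / 2)

/-- A metric space is quasiconvex if there is `C ≥ 1` such that any two points are
joined by a rectifiable curve of length at most `C · d(x,y)`. -/
def QuasiconvexSpace (X : Type*) [MetricSpace X] : Prop :=
  ∃ C : ℝ, 1 ≤ C ∧ ∀ x y : X, ∃ γ : ℝ → X,
    ContinuousOn γ (Set.Icc 0 1) ∧ γ 0 = x ∧ γ 1 = y ∧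
    eVariationOn γ (Set.Icc 0 1) ≤ ENNReal.ofReal (C * dist x y)

/-- Assumptions (A): complete, doubling and quasiconvex. -/
def AssumptionsA (X : Type*) [MetricSpace X] : Prop :=
  CompleteSpace X ∧ DoublingSpace X ∧ QuasiconvexSpace X

/-- A domain: a nonempty open connected subset. -/
def IsDomainIn {X : Type*} [MetricSpace X] (Ω : Set X) : Prop :=
  IsOpen Ω ∧ IsConnected Ω

/-- The inner diameter distance `dist_{M'}` between `E, F ⊆ Ω`: the infimum of diameters of
rectifiable curves in `Ω` joining `E` and `F` (the infimum of the empty set being `∞`). -/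
def innerDiamDist {X : Type*} [MetricSpace X] (Ω E F : Set X) : ℝ≥0∞ :=
  ⨅ (γ : ℝ → X) (_ : ContinuousOn γ (Set.Icc 0 1) ∧ γ '' Set.Icc 0 1 ⊆ Ω ∧
      eVariationOn γ (Set.Icc 0 1) < ⊤ ∧ γ 0 ∈ E ∧ γ 1 ∈ F),
    EMetric.diam (γ '' Set.Icc 0 1)

/-- The Mazurkiewicz distance `dist_M` between `A, B ⊆ Ω`: the infimum of diameters of
connected subsets of `Ω` meeting both `A` and `B`. -/
def mazDist {X : Type*} [MetricSpace X] (Ω A B : Set X) : ℝ≥0∞ :=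
  ⨅ (K : Set X) (_ : K ⊆ Ω ∧ IsConnected K ∧ (K ∩ A).Nonempty ∧ (K ∩ B).Nonempty),
    EMetric.diam K

/-- An acceptable set in a bounded domain `Ω`: a bounded connected proper subset of `Ω`
whose closure meets `∂Ω`. -/
def AcceptableIn {X : Type*} [MetricSpace X] (Ω E : Set X) : Prop :=
  Bornology.IsBounded E ∧ IsConnected E ∧ E ⊆ Ω ∧ E ≠ Ω ∧
    (closure E ∩ frontier Ω).Nonempty

/-- A chain in `Ω`. -/
def IsChainIn {X : Type*} [MetricSpace X] (Ω : Set X) (E : ℕ → Set X) : Prop :=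
  (∀ k, AcceptableIn Ω (E k)) ∧
  (∀ k, E (k + 1) ⊆ E k) ∧
  (∀ k, 0 < mazDist Ω (Ω ∩ frontier (E (k + 1))) (Ω ∩ frontier (E k))) ∧
  (⋂ k, closure (E k)) ⊆ frontier Ω

/-- The impression of a chain. -/
def impression {X : Type*} [MetricSpace X] (E : ℕ → Set X) : Set X :=
  ⋂ k, closure (E k)

/-- A chain `E` divides a chain `F` if every member of `F` contains some member of `E`. -/
def ChainDivides {X : Type*} (E F : ℕ → Set X) : Prop :=
  ∀ k, ∃ l, E l ⊆ F k

/-- Two chains are equivalent if they divide each other. -/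
def ChainEquiv {X : Type*} (E F : ℕ → Set X) : Prop :=
  ChainDivides E F ∧ ChainDivides F E

/-- A chain represents a prime end if every chain dividing it is equivalent to it. -/
def IsPrimeChain {X : Type*} [MetricSpace X] (Ω : Set X) (E : ℕ → Set X) : Prop :=
  IsChainIn Ω E ∧ ∀ F : ℕ → Set X, IsChainIn Ω F → ChainDivides F E → ChainDivides E F

/-- A chain represents a singleton prime end if moreover its impression is a single point. -/
def IsSingletonPrimeChain {X : Type*} [MetricSpace X] (Ω : Set X) (E : ℕ → Set X) : Prop :=
  IsPrimeChain Ω E ∧ ∃ x : X, impression E = {x}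

/-- The bounded turning condition (linear connectedness): any two distinct points of `Ω` lie in a
continuum contained in `Ω` of diameter at most `L` times their distance. -/
def BoundedTurning {X : Type*} [MetricSpace X] (Ω : Set X) : Prop :=
  ∃ L : ℝ, 1 ≤ L ∧ ∀ x ∈ Ω, ∀ y ∈ Ω, x ≠ y → ∃ K : Set X,
    K ⊆ Ω ∧ IsCompact K ∧ IsConnected K ∧ K.Nontrivial ∧ x ∈ K ∧ y ∈ K ∧
    Metric.diam K ≤ L * dist x y

/-- `Ω` is finitely connected at a boundary point `x`. -/
def FinitelyConnectedAt {X : Type*} [MetricSpace X] (Ω : Set X) (x : X) : Prop :=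
  ∀ r : ℝ, 0 < r → ∃ U : Set X, IsOpen U ∧ Bornology.IsBounded U ∧ x ∈ U ∧
    U ⊆ Metric.ball x r ∧
    {C : Set X | ∃ y ∈ U ∩ Ω, C = connectedComponentIn (U ∩ Ω) y}.Finite

/-- `Ω` is finitely connected at the boundary. -/
def FinitelyConnectedAtBoundary {X : Type*} [MetricSpace X] (Ω : Set X) : Prop :=
  ∀ x ∈ frontier Ω, FinitelyConnectedAt Ω x

/-- `Ω` is locally connected at a boundary point `x`. -/
def LocallyConnectedAt {X : Type*} [MetricSpace X] (Ω : Set X) (x : X) : Prop :=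
  ∀ r : ℝ, 0 < r → ∃ U : Set X, IsOpen U ∧ Bornology.IsBounded U ∧ x ∈ U ∧
    U ⊆ Metric.ball x r ∧ IsConnected (U ∩ Ω)

/-- `Ω` is locally connected at the boundary. -/
def LocallyConnectedAtBoundary {X : Type*} [MetricSpace X] (Ω : Set X) : Prop :=
  ∀ x ∈ frontier Ω, LocallyConnectedAt Ω x

/-- `f` is a homeomorphism of `Ω` onto `Ω'` with inverse `g`. -/
def IsHomeoBetween {X Y : Type*} [MetricSpace X] [MetricSpace Y] (f : X → Y) (g : Y → X)
    (Ω : Set X) (Ω' : Set Y) : Prop :=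
  ContinuousOn f Ω ∧ ContinuousOn g Ω' ∧ Set.MapsTo f Ω Ω' ∧ Set.MapsTo g Ω' Ω ∧
  (∀ x ∈ Ω, g (f x) = x) ∧ (∀ y ∈ Ω', f (g y) = y)

/-- The class `F(Ω, Ω')`: homeomorphisms such that for all connected `E, F ⊊ Ω`,
`dist_{M'}(E,F) = 0` iff `dist_{M'}(f(E), f(F)) = 0`. -/
def ClassF {X Y : Type*} [MetricSpace X] [MetricSpace Y] (Ω : Set X) (Ω' : Set Y)
    (f : X → Y) (g : Y → X) : Prop :=
  IsHomeoBetween f g Ω Ω' ∧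
  ∀ E F : Set X, E ⊆ Ω → E ≠ Ω → IsConnected E → F ⊆ Ω → F ≠ Ω → IsConnected F →
    (innerDiamDist Ω E F = 0 ↔ innerDiamDist Ω' (f '' E) (f '' F) = 0)

/-- The cluster set `C(f, x)` of `f : Ω → Y` at `x`. -/
def clusterSetOn {X Y : Type*} [MetricSpace X] [MetricSpace Y] (f : X → Y) (Ω : Set X)
    (x : X) : Set Y :=
  ⋂ U ∈ 𝓝 x, closure (f '' (U ∩ Ω))


/-- convergence of points of `Ω` to a point of the impression of a chain of
subdomains implies eventual membership in every member of the chain. -/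
theorem statement_0 {X : Type*} [MetricSpace X] (hX : AssumptionsA X)
    (Ω : Set X) (hΩdom : IsDomainIn Ω) (hΩbdd : Bornology.IsBounded Ω)
    (hΩne : Ω ≠ Set.univ) (hΩbt : BoundedTurning Ω)
    (E : ℕ → Set X) (hchain : IsChainIn Ω E) (hopen : ∀ k, IsOpen (E k))
    (x : X) (hx : x ∈ ⋂ k, closure (E k))
    (u : ℕ → X) (hu : ∀ n, u n ∈ Ω)
    (hconv : Filter.Tendsto u Filter.atTop (𝓝 x)) :
    ∀ k : ℕ, ∃ N : ℕ, ∀ n > N, u n ∈ E k := by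
  intro k
  obtain ⟨hacc, hsub, hmaz, -⟩ := hchain
  obtain ⟨L, hL, hbt⟩ := hΩbt
  have hL0 : 0 < L := by linarith
  obtain ⟨δ, hδ0, hδ⟩ := ENNReal.lt_iff_exists_nnreal_btwn.1 (hmaz k)
  have hδ0' : (0 : ℝ) < δ := by exact_mod_cast hδ0
  have hε : (0 : ℝ) < δ / L / 2 := by positivity
  obtain ⟨N, hN⟩ := (Metric.tendsto_atTop.1 hconv) _ hε
  refine ⟨N, fun n hn => ?_⟩
  by_contra hnot
  obtain ⟨y, hyE, hy⟩ := Metric.mem_closure_iff.1 (Set.mem_iInter.1 hx (k + 1)) _ hε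
  have hun := hN n hn.le
  have hne : u n ≠ y := by
    intro h
    exact hnot (h ▸ hsub k hyE)
  have hyΩ : y ∈ Ω := (hacc (k + 1)).2.2.1 hyE
  obtain ⟨K, hKΩ, hKc, hKconn, -, hKu, hKy, hKd⟩ := hbt _ (hu n) _ hyΩ hne
  have hdist : dist (u n) y < δ / L := by
    have := dist_triangle (u n) x y
    linarith
  have hdiam : Metric.diam K < δ := by
    refine hKd.trans_lt ?_
    rw [lt_div_iff₀ hL0] at hdist
    linarith
  have key : ∀ A : Set X, y ∈ A → u n ∉ A → (K ∩ frontier A).Nonempty := by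
    intro A hA hA'
    by_contra hcon
    rw [Set.not_nonempty_iff_eq_empty] at hcon
    rcases hKconn.isPreconnected.subset_or_subset (isOpen_interior (s := A))
      (isOpen_interior (s := Aᶜ))
      (disjoint_compl_right.mono interior_subset interior_subset) (by
        intro z hz
        have hzf : z ∉ frontier A := fun h => by
          have : z ∈ K ∩ frontier A := ⟨hz, h⟩
          rw [hcon] at this
          exact this
        rw [interior_compl]
        by_cases hzA : z ∈ closure A
        · left
          by_contra hzi
          exact hzf ⟨hzA, hzi⟩
        · exact Or.inr hzA) with h | h
    · exact hA' (interior_subset (h hKu))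
    · exact interior_subset (h hKy) hA
  obtain ⟨a, haK, ha⟩ := key (E (k + 1)) hyE (fun h => hnot (hsub k h))
  obtain ⟨b, hbK, hb⟩ := key (E k) (hsub k hyE) hnot
  have hle : mazDist Ω (Ω ∩ frontier (E (k + 1))) (Ω ∩ frontier (E k)) ≤ Metric.ediam K :=
    iInf₂_le K ⟨hKΩ, hKconn, ⟨a, haK, hKΩ haK, ha⟩, ⟨b, hbK, hKΩ hbK, hb⟩⟩
  have hlt : (δ : ℝ≥0∞) < Metric.ediam K := hδ.trans_le hle
  have hfin : Metric.ediam K ≠ ⊤ := hKc.isBounded.ediam_ne_top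
  have h2 := (ENNReal.toReal_lt_toReal ENNReal.coe_ne_top hfin).2 hlt
  rw [ENNReal.coe_toReal] at h2
  exact absurd (h2.trans hdiam) (lt_irrefl _)
end
end

section
/- Let X and Y be metric spaces satisfying assumptions (A), let Ω ⊊ X be a bounded domain that is locally connected at the boundary, let D ⊊ Y be a bounded domain, and let f ∈ F(Ω, D). If {E_k} is a chain in Ω, then {f(E_k)} is a chain in D. -/
open Set Metric Filter Bornology
open scoped ENNReal Topology

noncomputable section

lemma aux_compact {X : Type*} [MetricSpace X] (hX : AssumptionsA X) {S : Set X}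
    (hS : Bornology.IsBounded S) : IsCompact (closure S) := by
  obtain ⟨hc, ⟨N, hN⟩, -⟩ := hX
  have key : ∀ (n : ℕ) (x : X) (r : ℝ), ∃ t : Set X, t.Finite ∧
      Metric.ball x r ⊆ ⋃ y ∈ t, Metric.ball y (r / 2 ^ n) := by
    intro n
    induction n with
    | zero => intro x r; exact ⟨{x}, Set.finite_singleton x, by simp⟩
    | succ n ih =>
      intro x r
      obtain ⟨t, -, ht⟩ := hN x r
      choose u hu1 hu2 using fun y : X => ih y (r / 2)
      refine ⟨⋃ y ∈ t, u y, t.finite_toSet.biUnion (fun y _ => hu1 y), ?_⟩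
      intro z hz
      obtain ⟨y, hy, hzy⟩ := Set.mem_iUnion₂.1 (ht hz)
      obtain ⟨w, hw, hzw⟩ := Set.mem_iUnion₂.1 (hu2 y hzy)
      refine Set.mem_iUnion₂.2 ⟨w, Set.mem_iUnion₂.2 ⟨y, hy, hw⟩, ?_⟩
      rwa [pow_succ', ← div_div]
  have htb : TotallyBounded S := by
    rcases S.eq_empty_or_nonempty with rfl | ⟨x, hx⟩
    · exact totallyBounded_empty
    obtain ⟨r, hr⟩ := hS.subset_ball x
    refine Metric.totallyBounded_iff.2 fun ε hε => ?_
    obtain ⟨n, hn⟩ : ∃ n : ℕ, r / 2 ^ n < ε := by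
      have h1 : Tendsto (fun n : ℕ => r * (1 / 2 : ℝ) ^ n) atTop (𝓝 (r * 0)) :=
        (tendsto_pow_atTop_nhds_zero_of_lt_one (by norm_num) (by norm_num)).const_mul r
      rw [mul_zero] at h1
      obtain ⟨n, hn⟩ := (h1.eventually (gt_mem_nhds hε)).exists
      refine ⟨n, ?_⟩
      rw [one_div, inv_pow] at hn
      rwa [div_eq_mul_inv]
    obtain ⟨t, ht, hts⟩ := key n x r
    refine ⟨t, ht, (hr.trans hts).trans ?_⟩
    exact Set.iUnion₂_mono fun y _ => Metric.ball_subset_ball hn.le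
  exact isCompact_iff_totallyBounded_isComplete.2 ⟨htb.closure, isClosed_closure.isComplete⟩

/-- joined by a rectifiable curve in `W`. -/
def AuxJoin {X : Type*} [MetricSpace X] (W : Set X) (x y : X) : Prop :=
  ∃ γ : ℝ → X, ContinuousOn γ (Set.Icc 0 1) ∧ γ '' Set.Icc 0 1 ⊆ W ∧
      eVariationOn γ (Set.Icc 0 1) < ⊤ ∧ γ 0 = x ∧ γ 1 = y

lemma AuxJoin.symm' {X : Type*} [MetricSpace X] {W : Set X} {x y : X} (h : AuxJoin W x y) :
    AuxJoin W y x := by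
  obtain ⟨γ, hc, hW, hv, h0, h1⟩ := h
  have hm : MapsTo (fun t : ℝ => 1 - t) (Icc 0 1) (Icc 0 1) := by
    intro t ht; simp only [mem_Icc] at *; constructor <;> linarith
  refine ⟨γ ∘ fun t => 1 - t, hc.comp (by fun_prop) hm, ?_, ?_, by simpa, by simpa⟩
  · rintro _ ⟨t, ht, rfl⟩
    exact hW ⟨_, hm ht, rfl⟩
  · refine lt_of_le_of_lt (eVariationOn.comp_le_of_antitoneOn γ _ ?_ hm) hv
    intro a _ b _ hab
    simp only
    linarith

lemma AuxJoin.trans' {X : Type*} [MetricSpace X] {W : Set X} {x y z : X} (h : AuxJoin W x y)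
    (h' : AuxJoin W y z) : AuxJoin W x z := by
  obtain ⟨γ, hc, hW, hv, h0, h1⟩ := h
  obtain ⟨δ, kc, kW, kv, k0, k1⟩ := h'
  have hm : MapsTo (fun t : ℝ => 2 * t) (Icc 0 (1 / 2)) (Icc 0 1) := by
    intro t ht; simp only [mem_Icc] at *; constructor <;> linarith
  have km : MapsTo (fun t : ℝ => 2 * t - 1) (Icc (1 / 2) 1) (Icc 0 1) := by
    intro t ht; simp only [mem_Icc] at *; constructor <;> linarith
  let η : ℝ → X := fun t => if t ≤ 1 / 2 then γ (2 * t) else δ (2 * t - 1)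
  have e1 : EqOn η (γ ∘ fun t => 2 * t) (Icc 0 (1 / 2)) := by
    intro t ht
    simp only [η, if_pos ht.2, Function.comp]
  have e2 : EqOn η (δ ∘ fun t => 2 * t - 1) (Icc (1 / 2) 1) := by
    intro t ht
    by_cases h : t ≤ 1 / 2
    · have : t = 1 / 2 := le_antisymm h ht.1
      subst this
      simp [η, h1, k0]
    · simp only [η, if_neg h, Function.comp]
  have hU : Icc (0 : ℝ) (1 / 2) ∪ Icc (1 / 2) 1 = Icc 0 1 :=
    Icc_union_Icc_eq_Icc (by norm_num) (by norm_num)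
  have c1 : ContinuousOn η (Icc 0 (1 / 2)) := (hc.comp (by fun_prop) hm).congr e1
  have c2 : ContinuousOn η (Icc (1 / 2) 1) := (kc.comp (by fun_prop) km).congr e2
  refine ⟨η, ?_, ?_, ?_, ?_, ?_⟩
  · rw [← hU]
    exact c1.union_of_isClosed c2 isClosed_Icc isClosed_Icc
  · rw [← hU]
    rintro _ ⟨t, ht | ht, rfl⟩
    · rw [e1 ht]; exact hW ⟨_, hm ht, rfl⟩
    · rw [e2 ht]; exact kW ⟨_, km ht, rfl⟩
  · rw [← hU, eVariationOn.union η (x := 1 / 2) (isGreatest_Icc (by norm_num))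
      (isLeast_Icc (by norm_num)), eVariationOn.congr e1, eVariationOn.congr e2]
    refine ENNReal.add_lt_top.2 ⟨lt_of_le_of_lt (eVariationOn.comp_le_of_monotoneOn γ _ ?_ hm) hv,
      lt_of_le_of_lt (eVariationOn.comp_le_of_monotoneOn δ _ ?_ km) kv⟩
    · intro a _ b _ hab
      simp only
      linarith
    · intro a _ b _ hab
      simp only
      linarith
  · simpa [η] using h0
  · have : η 1 = _ := e2 (by norm_num)
    rw [this]
    simp only [Function.comp]
    norm_num
    exact k1

lemma aux_join {X : Type*} [MetricSpace X] (hX : AssumptionsA X) {W K : Set X} (hW : IsOpen W)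
    (hKW : K ⊆ W) (hK : IsPreconnected K) {x y : X} (hx : x ∈ K) (hy : y ∈ K) :
    AuxJoin W x y := by
  obtain ⟨-, -, C, hC, hq⟩ := hX
  refine hK.induction₂ (AuxJoin W) ?_ (fun x y z _ _ _ h h' => h.trans' h')
    (fun x y _ _ h => h.symm') hx hy
  intro z hz
  obtain ⟨ε, hε, hb⟩ := Metric.isOpen_iff.1 hW z (hKW hz)
  refine mem_nhdsWithin_of_mem_nhds ?_
  filter_upwards [Metric.ball_mem_nhds z (show 0 < ε / C by positivity)] with w hw
  obtain ⟨γ, hc, h0, h1, hv⟩ := hq z w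
  refine ⟨γ, hc, ?_, lt_of_le_of_lt hv ENNReal.ofReal_lt_top, h0, h1⟩
  rintro _ ⟨t, ht, rfl⟩
  apply hb
  have h2 : edist (γ t) (γ 0) ≤ ENNReal.ofReal (C * dist z w) :=
    (eVariationOn.edist_le γ ht (by simp)).trans hv
  rw [edist_dist, ENNReal.ofReal_le_ofReal_iff (by positivity), h0] at h2
  rw [Metric.mem_ball, dist_comm, lt_div_iff₀ (by positivity)] at hw
  rw [Metric.mem_ball]
  linarith [mul_comm C (dist z w)]

lemma aux_innerDiam {Y : Type*} [MetricSpace Y] (hY : AssumptionsA Y) {D K A B : Set Y}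
    (hD : IsOpen D) (hKD : K ⊆ D) (hK : IsPreconnected K) {p q : Y} (hp : p ∈ K) (hq : q ∈ K)
    (hpA : p ∈ A) (hqB : q ∈ B) {ε : ℝ} (hε : 0 < ε)
    (hd : Metric.ediam K ≤ ENNReal.ofReal ε) :
    innerDiamDist D A B ≤ ENNReal.ofReal (3 * ε) := by
  have hW : IsOpen (D ∩ Metric.thickening ε K) := hD.inter Metric.isOpen_thickening
  obtain ⟨γ, hc, hi, hv, h0, h1⟩ := aux_join hY hW
    (subset_inter hKD (Metric.self_subset_thickening hε K)) hK hp hq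
  refine (iInf₂_le γ ⟨hc, hi.trans inter_subset_left, hv, h0 ▸ hpA, h1 ▸ hqB⟩).trans ?_
  refine Metric.ediam_le fun x hx y hy => ?_
  obtain ⟨x', hx', hxx⟩ := Metric.mem_thickening_iff.1 (hi hx).2
  obtain ⟨y', hy', hyy⟩ := Metric.mem_thickening_iff.1 (hi hy).2
  have := (Metric.edist_le_ediam_of_mem hx' hy').trans hd
  rw [edist_dist, ENNReal.ofReal_le_ofReal_iff hε.le] at this
  rw [edist_dist]
  refine ENNReal.ofReal_le_ofReal ?_
  have h4 := dist_triangle4 x x' y' y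
  rw [dist_comm y' y] at h4
  linarith

lemma aux_frontier {X Y : Type*} [MetricSpace X] [MetricSpace Y] {Ω : Set X} {D : Set Y}
    (hD : IsOpen D) {f : X → Y} {g : Y → X} (hh : IsHomeoBetween f g Ω D) {E : Set X}
    (hE : E ⊆ Ω) {y : Y} (hy : y ∈ D) : (y ∈ closure (f '' E) → g y ∈ closure E) ∧
      (y ∈ frontier (f '' E) → g y ∈ frontier E) := by
  obtain ⟨hf, hg, mf, mg, gf, fg⟩ := hh
  have hgc : ContinuousAt g y := hg.continuousAt (hD.mem_nhds hy)
  have h1 : y ∈ closure (f '' E) → g y ∈ closure E := by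
    intro h
    rw [mem_closure_iff_nhds] at h ⊢
    intro t ht
    obtain ⟨_, hz, ⟨e, he, rfl⟩⟩ := h _ (hgc ht)
    refine ⟨e, ?_, he⟩
    have : g (f e) ∈ t := hz
    rwa [gf e (hE he)] at this
  refine ⟨h1, fun h => ⟨h1 h.1, fun hi => h.2 ?_⟩⟩
  rw [mem_interior_iff_mem_nhds] at hi ⊢
  filter_upwards [hgc hi, hD.mem_nhds hy] with z hz hzD
  exact ⟨g z, hz, fg z hzD⟩

lemma aux_maz {X : Type*} [MetricSpace X] {Ω A B K : Set X} (hK : K ⊆ Ω) (hc : IsConnected K)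
    {a b : X} (ha : a ∈ K) (hb : b ∈ K) (haA : a ∈ A) (hbB : b ∈ B) :
    mazDist Ω A B ≤ Metric.ediam K :=
  iInf₂_le K ⟨hK, hc, ⟨a, ha, haA⟩, ⟨b, hb, hbB⟩⟩

lemma aux_main {X Y : Type*} [MetricSpace X] [MetricSpace Y]
    (hX : AssumptionsA X) (hY : AssumptionsA Y)
    (Ω : Set X) (hΩdom : IsDomainIn Ω) (hΩbdd : Bornology.IsBounded Ω)
    (hΩlc : LocallyConnectedAtBoundary Ω)
    (D : Set Y) (hDdom : IsDomainIn D)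
    (f : X → Y) (g : Y → X) (hf : ClassF Ω D f g)
    (E F : Set X) (hE : E ⊆ Ω) (hF : F ⊆ Ω)
    (hm : 0 < mazDist Ω (Ω ∩ frontier E) (Ω ∩ frontier F)) :
    0 < mazDist D (D ∩ frontier (f '' E)) (D ∩ frontier (f '' F)) := by
  by_contra hcon
  have h0 : mazDist D (D ∩ frontier (f '' E)) (D ∩ frontier (f '' F)) = 0 := by
    simpa using hcon
  have hex : ∀ n : ℕ, ∃ (K : Set Y) (p q : Y), K ⊆ D ∧ IsConnected K ∧ p ∈ K ∧ q ∈ K ∧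
      p ∈ D ∩ frontier (f '' E) ∧ q ∈ D ∩ frontier (f '' F) ∧
      Metric.ediam K ≤ ENNReal.ofReal (1 / ((n : ℝ) + 1)) := by
    intro n
    have hlt : mazDist D (D ∩ frontier (f '' E)) (D ∩ frontier (f '' F)) <
        ENNReal.ofReal (1 / ((n : ℝ) + 1)) := by
      rw [h0]; exact ENNReal.ofReal_pos.2 (by positivity)
    unfold mazDist at hlt
    simp only [iInf_lt_iff] at hlt
    obtain ⟨K, ⟨h1, h2, ⟨p, h3, h4⟩, ⟨q, h5, h6⟩⟩, h7⟩ := hlt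
    exact ⟨K, p, q, h1, h2, h3, h5, h4, h6, h7.le⟩
  choose K p q hKD hKc hp hq hpE hqF hd using hex
  have hh := hf.1
  obtain ⟨fc, gc, mf, mg, gf, fg⟩ := hh
  have hdist : ∀ n, dist (p n) (q n) ≤ 1 / ((n : ℝ) + 1) := by
    intro n
    have := (Metric.edist_le_ediam_of_mem (hp n) (hq n)).trans (hd n)
    rwa [edist_dist, ENNReal.ofReal_le_ofReal_iff (by positivity)] at this
  have hdist0 : Tendsto (fun n => dist (p n) (q n)) atTop (𝓝 0) :=
    squeeze_zero (fun _ => dist_nonneg) hdist tendsto_one_div_add_atTop_nhds_zero_nat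
  have haΩ : ∀ n, g (p n) ∈ Ω := fun n => mg (hpE n).1
  have hbΩ : ∀ n, g (q n) ∈ Ω := fun n => mg (hqF n).1
  have haE : ∀ n, g (p n) ∈ frontier E := fun n =>
    (aux_frontier hDdom.1 hf.1 hE (hpE n).1).2 (hpE n).2
  have hbF : ∀ n, g (q n) ∈ frontier F := fun n =>
    (aux_frontier hDdom.1 hf.1 hF (hqF n).1).2 (hqF n).2
  have hcomp := aux_compact hX hΩbdd
  obtain ⟨⟨a, b⟩, ⟨ha, hb⟩, φ, hφ, hlim⟩ := (hcomp.prod hcomp).tendsto_subseq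
    (x := fun n => (g (p n), g (q n))) (fun n => ⟨subset_closure (haΩ n), subset_closure (hbΩ n)⟩)
  have hla : Tendsto (fun n => g (p (φ n))) atTop (𝓝 a) :=
    (continuous_fst.tendsto (a, b)).comp hlim
  have hlb : Tendsto (fun n => g (q (φ n))) atTop (𝓝 b) :=
    (continuous_snd.tendsto (a, b)).comp hlim
  have hdφ : Tendsto (fun n => dist (p (φ n)) (q (φ n))) atTop (𝓝 0) :=
    hdist0.comp hφ.tendsto_atTop
  have haE' : a ∈ frontier E := isClosed_frontier.mem_of_tendsto hla (Eventually.of_forall fun n => haE _)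
  have hbF' : b ∈ frontier F := isClosed_frontier.mem_of_tendsto hlb (Eventually.of_forall fun n => hbF _)
  have trans : ∀ (u v : ℕ → Y) (c : X), c ∈ Ω → (∀ n, u n ∈ D) → 
      Tendsto (fun n => g (u n)) atTop (𝓝 c) → Tendsto (fun n => dist (u n) (v n)) atTop (𝓝 0) →
      Tendsto (fun n => g (v n)) atTop (𝓝 c) := by
    intro u v c hc hu hgu huv
    have h1 : Tendsto (fun n => f (g (u n))) atTop (𝓝 (f c)) :=
      (fc.continuousAt (hΩdom.1.mem_nhds hc)).tendsto.comp hgu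
    simp only [fg _ (hu _)] at h1
    have h2 : Tendsto v atTop (𝓝 (f c)) := (tendsto_iff_of_dist huv).1 h1
    have h3 := (gc.continuousAt (hDdom.1.mem_nhds (mf hc))).tendsto.comp h2
    rwa [gf c hc] at h3
  have case1 : a ∉ Ω := by
    intro haO
    have hab : b = a := tendsto_nhds_unique hlb (trans _ _ a haO (fun n => (hpE _).1) hla hdφ)
    subst hab
    have := aux_maz (Ω := Ω) (A := Ω ∩ frontier E) (B := Ω ∩ frontier F) (K := {b}) (by simpa using haO) isConnected_singleton rfl rfl
      (⟨haO, haE'⟩ : b ∈ Ω ∩ frontier E) (⟨haO, hbF'⟩ : b ∈ Ω ∩ frontier F)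
    rw [Metric.ediam_singleton] at this
    exact absurd hm (not_lt.2 this)
  have case2 : b ∉ Ω := by
    intro hbO
    simp only [dist_comm (p _)] at hdφ
    have hab : a = b := tendsto_nhds_unique hla (trans _ _ b hbO (fun n => (hqF _).1) hlb hdφ)
    exact case1 (hab ▸ hbO)
  have haf : a ∈ frontier Ω := by rw [hΩdom.1.frontier_eq]; exact ⟨ha, case1⟩
  have hbf : b ∈ frontier Ω := by rw [hΩdom.1.frontier_eq]; exact ⟨hb, case2⟩
  by_cases hab : a = b
  · subst hab
    have hle : ∀ ε : ℝ, 0 < ε → mazDist Ω (Ω ∩ frontier E) (Ω ∩ frontier F) ≤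
        ENNReal.ofReal (2 * ε) := by
      intro ε hε
      obtain ⟨U, hUo, -, haU, hUb, hUc⟩ := hΩlc a haf ε hε
      obtain ⟨n, hn1, hn2⟩ := ((hla.eventually (hUo.mem_nhds haU)).and
        (hlb.eventually (hUo.mem_nhds haU))).exists
      refine (aux_maz (A := Ω ∩ frontier E) (B := Ω ∩ frontier F) inter_subset_right hUc ⟨hn1, haΩ _⟩ ⟨hn2, hbΩ _⟩ ⟨haΩ _, haE _⟩
        ⟨hbΩ _, hbF _⟩).trans ?_
      refine Metric.ediam_le fun x hx y hy => ?_
      rw [edist_dist]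
      refine ENNReal.ofReal_le_ofReal ?_
      have h1 := hUb hx.1
      have h2 := hUb hy.1
      rw [Metric.mem_ball] at h1 h2
      linarith [dist_triangle_right x y a]
    obtain ⟨r, -, hr1, hr2⟩ := ENNReal.lt_iff_exists_real_btwn.1 hm
    have hr0 : 0 < r := ENNReal.ofReal_pos.1 hr1
    have := hle (r / 2) (by positivity)
    rw [mul_div_cancel₀ r two_ne_zero] at this
    exact absurd hr2 (not_lt.2 this)
  · set d := dist a b with hdd
    have hd0 : 0 < d := dist_pos.2 hab
    obtain ⟨U, hUo, -, haU, hUb, hUc⟩ := hΩlc a haf (d / 4) (by positivity)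
    obtain ⟨V, hVo, -, hbV, hVb, hVc⟩ := hΩlc b hbf (d / 4) (by positivity)
    have hUV : ∀ x ∈ U, ∀ y ∈ V, d / 2 < dist x y := by
      intro x hx y hy
      have h1 := hUb hx
      have h2 := hVb hy
      rw [Metric.mem_ball] at h1 h2
      have h4 := dist_triangle4 a x y b
      rw [dist_comm a x] at h4
      linarith
    have hUne : U ∩ Ω ≠ Ω := by
      intro h
      obtain ⟨v, hv⟩ := hVc.nonempty
      have : v ∈ U ∩ Ω := h.symm ▸ hv.2
      have := hUV v this.1 v hv.1
      rw [dist_self] at this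
      linarith
    have hVne : V ∩ Ω ≠ Ω := by
      intro h
      obtain ⟨v, hv⟩ := hUc.nonempty
      have : v ∈ V ∩ Ω := h.symm ▸ hv.2
      have := hUV v hv.1 v this.1
      rw [dist_self] at this
      linarith
    have hz : innerDiamDist D (f '' (U ∩ Ω)) (f '' (V ∩ Ω)) = 0 := by
      have hle : ∀ᶠ n in atTop, innerDiamDist D (f '' (U ∩ Ω)) (f '' (V ∩ Ω)) ≤
          ENNReal.ofReal (3 * (1 / ((φ n : ℝ) + 1))) := by
        filter_upwards [hla.eventually (hUo.mem_nhds haU), hlb.eventually (hVo.mem_nhds hbV)]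
          with n h1 h2
        exact aux_innerDiam (A := f '' (U ∩ Ω)) (B := f '' (V ∩ Ω)) hY hDdom.1 (hKD (φ n)) (hKc (φ n)).isPreconnected (hp _) (hq _)
          ⟨_, ⟨h1, haΩ _⟩, fg _ (hpE _).1⟩ ⟨_, ⟨h2, hbΩ _⟩, fg _ (hqF _).1⟩ (by positivity)
          (hd _)
      have ht : Tendsto (fun n => ENNReal.ofReal (3 * (1 / ((φ n : ℝ) + 1)))) atTop (𝓝 0) := by
        have h1 : Tendsto (fun n => 3 * (1 / ((φ n : ℝ) + 1))) atTop (𝓝 (3 * 0)) :=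
          (tendsto_one_div_add_atTop_nhds_zero_nat.comp hφ.tendsto_atTop).const_mul 3
        simpa using ENNReal.tendsto_ofReal h1
      exact le_antisymm (ge_of_tendsto ht hle) zero_le
    rw [← hf.2 _ _ inter_subset_right hUne hUc inter_subset_right hVne hVc] at hz
    have hlt : innerDiamDist Ω (U ∩ Ω) (V ∩ Ω) < ENNReal.ofReal (d / 2) := by
      rw [hz]; exact ENNReal.ofReal_pos.2 (by positivity)
    unfold innerDiamDist at hlt
    simp only [iInf_lt_iff] at hlt
    obtain ⟨γ, ⟨-, -, -, g0, g1⟩, hg⟩ := hlt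
    have h1 : edist (γ 0) (γ 1) ≤ Metric.ediam (γ '' Icc 0 1) :=
      Metric.edist_le_ediam_of_mem ⟨0, by simp, rfl⟩ ⟨1, by simp, rfl⟩
    have h2 := h1.trans hg.le
    rw [edist_dist, ENNReal.ofReal_le_ofReal_iff (by positivity)] at h2
    linarith [hUV _ g0.1 _ g1.1]

/-- a map in the class `F(Ω, D)` sends chains of `Ω` to chains of `D`. -/
theorem statement_1 {X Y : Type*} [MetricSpace X] [MetricSpace Y]
    (hX : AssumptionsA X) (hY : AssumptionsA Y)
    (Ω : Set X) (hΩdom : IsDomainIn Ω) (hΩbdd : Bornology.IsBounded Ω)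
    (hΩne : Ω ≠ Set.univ) (hΩlc : LocallyConnectedAtBoundary Ω)
    (D : Set Y) (hDdom : IsDomainIn D) (hDbdd : Bornology.IsBounded D)
    (hDne : D ≠ Set.univ)
    (f : X → Y) (g : Y → X) (hf : ClassF Ω D f g)
    (E : ℕ → Set X) (hE : IsChainIn Ω E) :
    IsChainIn D (fun k => f '' E k) := by
  obtain ⟨h1, h2, h3, h4⟩ := hE
  have hh := hf.1
  obtain ⟨fc, gc, mf, mg, gf, fg⟩ := hh
  have hsub : ∀ k, f '' E k ⊆ D := fun k => (mf.mono_left (h1 k).2.2.1).image_subset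
  have hcomp := aux_compact hY hDbdd
  refine ⟨fun k => ?_, fun k => image_mono (h2 k), fun k => ?_, ?_⟩
  · obtain ⟨hb, hc, hs, hne, x, hx, hxf⟩ := h1 k
    refine ⟨hDbdd.subset (hsub k), hc.image f (fc.mono hs), hsub k, ?_, ?_⟩
    · intro h
      apply hne
      refine subset_antisymm hs fun z hz => ?_
      have : f z ∈ f '' E k := by
        have h' : f '' E k = D := h
        rw [h']; exact mf hz
      obtain ⟨e, he, hez⟩ := this
      have : g (f e) = g (f z) := by rw [hez]
      rw [gf e (hs he), gf z hz] at this
      exact this ▸ he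
    · obtain ⟨u, hu, hlim⟩ := mem_closure_iff_seq_limit.1 hx
      obtain ⟨y, hy, φ, hφ, hy2⟩ := hcomp.tendsto_subseq (x := fun n => f (u n))
        (fun n => subset_closure (hsub k ⟨_, hu n, rfl⟩))
      refine ⟨y, mem_closure_of_tendsto hy2 (Eventually.of_forall fun n => ⟨_, hu _, rfl⟩), ?_⟩
      rw [hDdom.1.frontier_eq]
      refine ⟨hy, fun hyD => ?_⟩
      have h5 := (gc.continuousAt (hDdom.1.mem_nhds hyD)).tendsto.comp hy2
      have h6 : (g ∘ (fun n => f (u n)) ∘ φ) = u ∘ φ := by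
        funext n
        exact gf _ (hs (hu _))
      rw [h6] at h5
      have h7 := tendsto_nhds_unique h5 (hlim.comp hφ.tendsto_atTop)
      rw [hΩdom.1.frontier_eq] at hxf
      exact hxf.2 (h7 ▸ mg hyD)
  · exact aux_main hX hY Ω hΩdom hΩbdd hΩlc D hDdom f g hf _ _ (h1 _).2.2.1 (h1 _).2.2.1 (h3 k)
  · intro y hy
    rw [mem_iInter] at hy
    rw [hDdom.1.frontier_eq]
    refine ⟨closure_mono (hsub 0) (hy 0), fun hyD => ?_⟩
    have h5 : g y ∈ frontier Ω := h4 (mem_iInter.2 fun k =>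
      (aux_frontier hDdom.1 hf.1 (h1 k).2.2.1 hyD).1 (hy k))
    rw [hΩdom.1.frontier_eq] at h5
    exact h5.2 (mg hyD)
end
end

section
/- Let X and Y be metric spaces satisfying assumptions (A), let D ⊊ X be a bounded domain that is finitely connected at the boundary, let Ω ⊊ Y be a bounded domain that is locally connected at the boundary, and let f ∈ F(D, Ω). Then the map Φ : ∂_P^S D → ∂Ω defined by Φ([E_k]) := x, where {x} = I[f⁻¹(E_k)] is the (singleton) impression of the end represented by the chain {f⁻¹(E_k)}, is well defined (independent of the representative chain) and bijective. -/
open Set Metric Filter Bornology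
open scoped ENNReal Topology

noncomputable section

lemma aux_frontier_s5 {X : Type*} [TopologicalSpace X] {K S : Set X} (hK : IsPreconnected K)
    (h1 : (K ∩ S).Nonempty) (h2 : ¬ K ⊆ S) : (K ∩ frontier S).Nonempty := by
  by_contra hne
  have hd : ∀ z ∈ K, z ∉ frontier S := fun z hz hz' => hne ⟨z, hz, hz'⟩
  obtain ⟨a, haK, haS⟩ := h1
  obtain ⟨b, hbK, hbS⟩ := Set.not_subset.1 h2
  have key : ∀ z ∈ K, z ∈ interior S ∨ z ∈ (closure S)ᶜ := by
    intro z hz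
    by_contra h
    push Not at h
    exact hd z hz ⟨by simpa using h.2, h.1⟩
  have ha : a ∈ interior S := (key a haK).resolve_right (fun h => h (subset_closure haS))
  have hb : b ∈ (closure S)ᶜ := (key b hbK).resolve_left (fun h => hbS (interior_subset h))
  obtain ⟨z, _, hz1, hz2⟩ := hK (interior S) (closure S)ᶜ isOpen_interior
    isClosed_closure.isOpen_compl (fun z hz => key z hz) ⟨a, haK, ha⟩ ⟨b, hbK, hb⟩
  exact hz2 (subset_closure (interior_subset hz1))

/-- rectifiably joined in V -/
def RJ {X : Type*} [MetricSpace X] (V : Set X) (a b : X) : Prop :=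
  ∃ γ : ℝ → X, ContinuousOn γ (Set.Icc 0 1) ∧ γ '' Set.Icc 0 1 ⊆ V ∧
      eVariationOn γ (Set.Icc 0 1) < ⊤ ∧ γ 0 = a ∧ γ 1 = b

lemma RJ.symm {X : Type*} [MetricSpace X] {V : Set X} {a b : X} (h : RJ V a b) : RJ V b a := by
  obtain ⟨γ, h1, h2, h3, h4, h5⟩ := h
  have hm : MapsTo (fun t : ℝ => 1 - t) (Icc 0 1) (Icc 0 1) := by
    intro t ht; constructor <;> simp <;> linarith [ht.1, ht.2]
  refine ⟨γ ∘ fun t => 1 - t, h1.comp (by fun_prop) hm, ?_, ?_, by simpa, by simpa⟩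
  · rintro _ ⟨t, ht, rfl⟩
    exact h2 ⟨_, hm ht, rfl⟩
  · refine lt_of_le_of_lt (eVariationOn.comp_le_of_antitoneOn γ _ ?_ hm) h3
    intro x _ y _ hxy
    simp only; linarith

lemma RJ.trans {X : Type*} [MetricSpace X] {V : Set X} {a b c : X} (h : RJ V a b)
    (h' : RJ V b c) : RJ V a c := by
  obtain ⟨γ, h1, h2, h3, h4, h5⟩ := h
  obtain ⟨δ, k1, k2, k3, k4, k5⟩ := h'
  have hm : MapsTo (fun t : ℝ => 2 * t) (Icc 0 (1/2)) (Icc 0 1) := by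
    intro t ht; constructor <;> simp only <;> linarith [ht.1, ht.2]
  have hm' : MapsTo (fun t : ℝ => 2 * t - 1) (Icc (1/2) 1) (Icc 0 1) := by
    intro t ht; constructor <;> simp only <;> linarith [ht.1, ht.2]
  set η : ℝ → X := fun t => if t ≤ 1/2 then γ (2 * t) else δ (2 * t - 1) with hη
  have e1 : EqOn η (γ ∘ fun t => 2 * t) (Icc 0 (1/2)) := by
    intro t ht; simp only [hη, if_pos ht.2, Function.comp]
  have e2 : EqOn η (δ ∘ fun t => 2 * t - 1) (Icc (1/2) 1) := by
    intro t ht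
    by_cases h : t ≤ 1/2
    · have : t = 1/2 := le_antisymm h ht.1
      subst this
      simp only [hη, le_refl, if_true, Function.comp]
      norm_num [h5, k4]
    · simp only [hη, if_neg h, Function.comp]
  have hu : Icc (0:ℝ) 1 = Icc 0 (1/2) ∪ Icc (1/2) 1 :=
    (Icc_union_Icc_eq_Icc (by norm_num) (by norm_num)).symm
  refine ⟨η, ?_, ?_, ?_, ?_, ?_⟩
  · rw [hu]
    exact ContinuousOn.union_of_isClosed ((h1.comp (by fun_prop) hm).congr e1)
      ((k1.comp (by fun_prop) hm').congr e2) isClosed_Icc isClosed_Icc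
  · rw [hu]
    rintro _ ⟨t, ht | ht, rfl⟩
    · rw [e1 ht]; exact h2 ⟨_, hm ht, rfl⟩
    · rw [e2 ht]; exact k2 ⟨_, hm' ht, rfl⟩
  · rw [hu, eVariationOn.union η (x := 1/2) (isGreatest_Icc (by norm_num))
      (isLeast_Icc (by norm_num)), eVariationOn.congr e1, eVariationOn.congr e2]
    refine ENNReal.add_lt_top.2 ⟨lt_of_le_of_lt (eVariationOn.comp_le_of_monotoneOn γ _ ?_ hm) h3,
      lt_of_le_of_lt (eVariationOn.comp_le_of_monotoneOn δ _ ?_ hm') k3⟩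
    · intro x _ y _ hxy
      simp only; linarith
    · intro x _ y _ hxy
      simp only; linarith
  · rw [e1 ⟨le_rfl, by norm_num⟩]; simpa
  · rw [e2 ⟨by norm_num, le_rfl⟩]; norm_num [k5]

lemma RJ.connected {X : Type*} [MetricSpace X] {V : Set X} {a b : X} (h : RJ V a b) :
    ∃ K ⊆ V, IsConnected K ∧ a ∈ K ∧ b ∈ K := by
  obtain ⟨γ, h1, h2, h3, h4, h5⟩ := h
  exact ⟨_, h2, (isConnected_Icc zero_le_one).image γ h1, ⟨0, by simp, h4⟩, ⟨1, by simp, h5⟩⟩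

lemma RJ.local {X : Type*} [MetricSpace X] (hX : AssumptionsA X) {V : Set X} (hV : IsOpen V)
    {a : X} (ha : a ∈ V) : ∀ᶠ b in 𝓝 a, RJ V a b := by
  obtain ⟨-, -, C, hC, h⟩ := hX
  obtain ⟨δ, hδ, hb⟩ := Metric.isOpen_iff.1 hV a ha
  filter_upwards [Metric.ball_mem_nhds a (show 0 < δ / C by positivity)] with b hb'
  obtain ⟨γ, h1, h2, h3, h4⟩ := h a b
  refine ⟨γ, h1, ?_, lt_of_le_of_lt h4 ENNReal.ofReal_lt_top, h2, h3⟩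
  rintro _ ⟨t, ht, rfl⟩
  apply hb
  have := (eVariationOn.edist_le γ ht (show (0:ℝ) ∈ Icc (0:ℝ) 1 by simp)).trans h4
  rw [h2, edist_dist, ENNReal.ofReal_le_ofReal_iff (by positivity)] at this
  rw [mem_ball, dist_comm, lt_div_iff₀ (by positivity)] at hb'
  rw [mem_ball]
  linarith

lemma RJ.of_connected {X : Type*} [MetricSpace X] (hX : AssumptionsA X) {V K : Set X}
    (hV : IsOpen V) (hK : IsPreconnected K) (hKV : K ⊆ V) {a b : X} (ha : a ∈ K) (hb : b ∈ K) :
    RJ V a b := by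
  refine hK.induction₂ (RJ V) ?_ (fun x y z _ _ _ => RJ.trans) (fun x y _ _ => RJ.symm) ha hb
  intro x hx
  exact (RJ.local hX hV (hKV hx)).filter_mono nhdsWithin_le_nhds

def SC {X : Type*} [MetricSpace X] (D A B : Set X) : Prop :=
  ∀ ε : ℝ, 0 < ε → ∃ K ⊆ D, IsConnected K ∧ (K ∩ A).Nonempty ∧ (K ∩ B).Nonempty ∧
    ∃ p, K ⊆ ball p ε

lemma inner_zero_iff {X : Type*} [MetricSpace X] (hX : AssumptionsA X) {D : Set X}
    (hD : IsOpen D) (A B : Set X) : innerDiamDist D A B = 0 ↔ SC D A B := by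
  constructor
  · intro h ε hε
    have : innerDiamDist D A B < ENNReal.ofReal ε := by rw [h]; simpa
    unfold innerDiamDist at this
    simp only [iInf_lt_iff] at this
    obtain ⟨γ, ⟨h1, h2, h3, h4, h5⟩, h6⟩ := this
    refine ⟨_, h2, (isConnected_Icc zero_le_one).image γ h1, ⟨_, ⟨0, by simp, rfl⟩, h4⟩,
      ⟨_, ⟨1, by simp, rfl⟩, h5⟩, γ 0, ?_⟩
    intro z hz
    have := lt_of_le_of_lt (Metric.edist_le_ediam_of_mem hz ⟨0, by simp, rfl⟩) h6
    rwa [edist_dist, ENNReal.ofReal_lt_ofReal_iff hε] at this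
  · intro h
    refine le_antisymm (le_of_forall_gt fun c hc => ?_) bot_le
    obtain ⟨ε, -, hε, hεc⟩ := ENNReal.lt_iff_exists_real_btwn.1 hc
    have hε0 : 0 < ε := by simpa using hε
    obtain ⟨K, hKD, hKc, ⟨a, haK, haA⟩, ⟨b, hbK, hbB⟩, p, hp⟩ := h (ε / 2) (by linarith)
    obtain ⟨γ, h1, h2, h3, h4, h5⟩ := RJ.of_connected hX (hD.inter isOpen_ball)
      hKc.isPreconnected (subset_inter hKD hp) haK hbK
    refine lt_of_le_of_lt (iInf₂_le γ ⟨h1, h2.trans inter_subset_left, h3, h4 ▸ haA, h5 ▸ hbB⟩) ?_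
    refine lt_of_le_of_lt (Metric.ediam_le fun x hx y hy => ?_) hεc
    rw [edist_dist]
    apply ENNReal.ofReal_le_ofReal
    have e1 := (h2 hx).2
    have e2 := (h2 hy).2
    rw [mem_ball] at e1 e2
    linarith [dist_triangle_right x y p]

lemma chain_gap {X : Type*} [MetricSpace X] {D : Set X} {F : ℕ → Set X} (hF : IsChainIn D F)
    (k : ℕ) : ∃ ε > 0, ∀ K ⊆ D, IsConnected K → (K ∩ F (k + 1)).Nonempty → (∃ p, K ⊆ ball p ε) →
      K ⊆ F k := by
  obtain ⟨-, h2, h3, -⟩ := hF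
  obtain ⟨δ, -, hδ, hδc⟩ := ENNReal.lt_iff_exists_real_btwn.1 (h3 k)
  have hδ0 : 0 < δ := by simpa using hδ
  refine ⟨δ / 2, by linarith, ?_⟩
  rintro K hKD hKc hKF ⟨p, hp⟩
  by_contra hn
  obtain ⟨u, hu, hu'⟩ := aux_frontier_s5 hKc.isPreconnected hKF (fun h => hn (h.trans (h2 k)))
  obtain ⟨v, hv, hv'⟩ := aux_frontier_s5 hKc.isPreconnected
    (hKF.mono (inter_subset_inter_right _ (h2 k))) hn
  refine absurd hδc (not_lt.2 (le_trans (iInf₂_le K ⟨hKD, hKc, ⟨u, hu, hKD hu, hu'⟩,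
    ⟨v, hv, hKD hv, hv'⟩⟩) (Metric.ediam_le fun x hx y hy => ?_)))
  rw [edist_dist]
  apply ENNReal.ofReal_le_ofReal
  have e1 := hp hx
  have e2 := hp hy
  rw [mem_ball] at e1 e2
  linarith [dist_triangle_right x y p]

lemma chain_small {X : Type*} [MetricSpace X] (hX : AssumptionsA X) {D : Set X} {E : ℕ → Set X}
    (hE : IsChainIn D E) {x : X} (hx : impression E = {x}) {ε : ℝ} (hε : 0 < ε) :
    ∃ k, ∀ l ≥ k, E l ⊆ ball x ε := by
  obtain ⟨h1, h2, -, -⟩ := hE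
  have ha : Antitone E := antitone_nat_of_succ_le h2
  have ha' : Antitone fun k => closure (E k) := fun i j h => closure_mono (ha h)
  obtain ⟨k, hk⟩ := exists_subset_nhds_of_isCompact' (V := fun k => closure (E k))
    (U := ball x ε) ha'.directed_ge
    (fun k => aux_compact hX (h1 k).1) (fun k => isClosed_closure) (by
      intro z hz
      have : z ∈ impression E := hz
      rw [hx] at this
      rw [mem_singleton_iff.1 this]
      exact ball_mem_nhds x hε)
  exact ⟨k, fun l hl => (subset_closure.trans (ha' hl)).trans hk⟩
lemma img_singleton {X Y : Type*} [MetricSpace X] [MetricSpace Y]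
    (hX : AssumptionsA X) (hY : AssumptionsA Y)
    (D : Set X) (hDo : IsOpen D) 
    (Ω : Set Y) (hΩo : IsOpen Ω) (hΩbdd : Bornology.IsBounded Ω)
    (hΩlc : LocallyConnectedAtBoundary Ω)
    (f : X → Y) (g : Y → X) (hf : ClassF D Ω f g) (E : ℕ → Set X) (hE : IsChainIn D E)
    {x : X} (hx : impression E = {x}) :
    ∃ y, y ∈ frontier Ω ∧ impression (fun k => f '' E k) = {y} := by
  obtain ⟨⟨hfc, hgc, hfm, hgm, hgf, hfg⟩, hF⟩ := hf
  have h1 := hE.1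
  have ha : Antitone E := antitone_nat_of_succ_le hE.2.1
  have hED : ∀ k, E k ⊆ D := fun k => (h1 k).2.2.1
  have hfE : ∀ k, f '' E k ⊆ Ω := fun k => by
    rintro _ ⟨z, hz, rfl⟩; exact hfm (hED k hz)
  have hne : (impression (fun k => f '' E k)).Nonempty := by
    refine IsCompact.nonempty_iInter_of_sequence_nonempty_isCompact_isClosed _
      (fun k => closure_mono (image_mono (hE.2.1 k)))
      (fun k => ((h1 k).2.1.nonempty.image f).closure)
      (aux_compact hY (hΩbdd.subset (hfE 0))) (fun k => isClosed_closure)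
  have hfr : ∀ y ∈ impression (fun k => f '' E k), y ∈ frontier Ω := by
    intro y hy
    have hy' : ∀ k, y ∈ closure (f '' E k) := fun k => mem_iInter.1 hy k
    refine ⟨closure_mono (hfE 0) (hy' 0), ?_⟩
    rw [hΩo.interior_eq]
    intro hyΩ
    have hgy : ∀ k, g y ∈ closure (E k) := by
      intro k
      have := ((hgc.continuousAt (hΩo.mem_nhds hyΩ)).continuousWithinAt
        (s := f '' E k)).mem_closure_image (hy' k)
      refine closure_mono ?_ this
      rintro _ ⟨_, ⟨z, hz, rfl⟩, rfl⟩
      rwa [hgf z (hED k hz)]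
    have := hE.2.2.2 (mem_iInter.2 hgy)
    rw [hDo.frontier_eq] at this
    exact this.2 (hgm hyΩ)
  obtain ⟨a, ha'⟩ := hne
  refine ⟨a, hfr a ha', Subset.antisymm (fun b hb => ?_) (by simpa using ha')⟩
  by_contra hab
  have hab : b ≠ a := hab
  have hd : 0 < dist b a := dist_pos.2 hab
  set r := dist b a / 8 with hr
  have hr0 : 0 < r := by positivity
  have main : ∀ c ∈ impression (fun k => f '' E k), ∃ A, A ⊆ Ω ∧ IsConnected A ∧ A ⊆ ball c r ∧
      ∀ k, (E k ∩ g '' A).Nonempty := by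
    intro c hc
    obtain ⟨U, hUo, -, hcU, hUb, hUc⟩ := hΩlc c (hfr c hc) r hr0
    refine ⟨U ∩ Ω, inter_subset_right, hUc, inter_subset_left.trans hUb, fun k => ?_⟩
    obtain ⟨_, hzU, ⟨z, hz, rfl⟩⟩ := mem_closure_iff.1 (mem_iInter.1 hc k) U hUo hcU
    exact ⟨z, hz, f z, ⟨hzU, hfm (hED k hz)⟩, hgf z (hED k hz)⟩
  obtain ⟨A, hAΩ, hAc, hAb, hA⟩ := main a ha'
  obtain ⟨B, hBΩ, hBc, hBb, hB⟩ := main b hb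
  have hfgi : ∀ S ⊆ Ω, f '' (g '' S) = S := by
    intro S hS
    rw [image_image]
    exact (EqOn.image_eq_self (fun z hz => hfg z (hS hz)))
  have hdj : ∀ z ∈ A, ∀ w ∈ B, 6 * r < dist z w := by
    intro z hz w hw
    have e1 := hAb hz
    have e2 := hBb hw
    rw [mem_ball] at e1 e2
    rw [dist_comm] at e2
    linarith [dist_triangle4 b w z a, dist_comm z w]
  have hsub : ∀ S ⊆ Ω, g '' S ⊆ D := by
    rintro S hS _ ⟨z, hz, rfl⟩; exact hgm (hS hz)
  have hneD : ∀ S ⊆ Ω, ∀ T ⊆ Ω, T.Nonempty → (∀ z ∈ S, z ∉ T) → g '' S ≠ D := by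
    rintro S hS T hT ⟨t, ht⟩ hST h
    have : g t ∈ g '' S := by rw [h]; exact hgm (hT ht)
    obtain ⟨s, hs, hst⟩ := this
    have : s = t := by rw [← hfg s (hS hs), ← hfg t (hT ht), hst]
    exact hST s hs (this ▸ ht)
  have iff := hF (g '' A) (g '' B) (hsub A hAΩ)
    (hneD A hAΩ B hBΩ hBc.nonempty (fun z hz hz' => by
      have := hdj z hz z hz'; rw [dist_self] at this; linarith))
    (hAc.image g (hgc.mono hAΩ)) (hsub B hBΩ)
    (hneD B hBΩ A hAΩ hAc.nonempty (fun z hz hz' => by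
      have := hdj z hz' z hz; rw [dist_self] at this; linarith))
    (hBc.image g (hgc.mono hBΩ))
  rw [inner_zero_iff hX hDo, inner_zero_iff hY hΩo, hfgi A hAΩ, hfgi B hBΩ] at iff
  have hsc : SC D (g '' A) (g '' B) := by
    intro ε hε
    obtain ⟨k, hk⟩ := chain_small hX hE hx hε
    exact ⟨E k, hED k, (h1 k).2.1, hA k, hB k, x, hk k le_rfl⟩
  obtain ⟨K, -, -, ⟨z, hz, hzA⟩, ⟨w, hw, hwB⟩, p, hp⟩ := iff.1 hsc r hr0
  have e1 := hp hz
  have e2 := hp hw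
  rw [mem_ball] at e1 e2
  linarith [hdj z hzA w hwB, dist_triangle_right z w p]

lemma img_inj {X Y : Type*} [MetricSpace X] [MetricSpace Y]
    (hX : AssumptionsA X) (hY : AssumptionsA Y)
    (D : Set X) (hDo : IsOpen D) 
    (Ω : Set Y) (hΩo : IsOpen Ω) 
    (hΩlc : LocallyConnectedAtBoundary Ω)
    (f : X → Y) (g : Y → X) (hf : ClassF D Ω f g) (E F : ℕ → Set X) (hE : IsChainIn D E)
    {x x' : X} (hx : impression E = {x}) (hF : IsChainIn D F) (hx' : impression F = {x'})
    {y : Y} (hy : y ∈ frontier Ω) (hyE : y ∈ impression (fun k => f '' E k))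
    (hyF : y ∈ impression (fun k => f '' F k)) : ChainDivides E F := by
  obtain ⟨⟨hfc, hgc, hfm, hgm, hgf, hfg⟩, hcl⟩ := hf
  intro k
  obtain ⟨ε, hε, hgap⟩ := chain_gap hF k
  obtain ⟨l, hl⟩ := chain_small hX hE hx (ε := ε / 3) (by positivity)
  obtain ⟨m', hm'⟩ := chain_small hX hF hx' (ε := ε / 3) (by positivity)
  have ha : Antitone F := antitone_nat_of_succ_le hF.2.1
  obtain ⟨m, hm, hmk⟩ : ∃ m, F m ⊆ ball x' (ε / 3) ∧ F m ⊆ F (k + 1) :=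
    ⟨max m' (k + 1), hm' _ (le_max_left _ _), ha (le_max_right _ _)⟩
  obtain ⟨-, hEc, hED, hEne, -⟩ := hE.1 l
  obtain ⟨-, hFc, hFD, hFne, -⟩ := hF.1 m
  have hsc : SC Ω (f '' E l) (f '' F m) := by
    intro δ hδ
    obtain ⟨U, hUo, -, hyU, hUb, hUc⟩ := hΩlc y hy δ hδ
    obtain ⟨_, hzU, ⟨z, hz, rfl⟩⟩ := mem_closure_iff.1 (mem_iInter.1 hyE l) U hUo hyU
    obtain ⟨_, hwU, ⟨w, hw, rfl⟩⟩ := mem_closure_iff.1 (mem_iInter.1 hyF m) U hUo hyU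
    exact ⟨U ∩ Ω, inter_subset_right, hUc, ⟨f z, ⟨hzU, hfm (hED hz)⟩, z, hz, rfl⟩,
      ⟨f w, ⟨hwU, hfm (hFD hw)⟩, w, hw, rfl⟩, y, inter_subset_left.trans hUb⟩
  have iff := hcl (E l) (F m) hED hEne hEc hFD hFne hFc
  rw [inner_zero_iff hX hDo, inner_zero_iff hY hΩo] at iff
  obtain ⟨K, hKD, hKc, ⟨z, hz, hzE⟩, ⟨w, hw, hwF⟩, p, hp⟩ := iff.2 hsc (ε / 3) (by positivity)
  refine ⟨l, ?_⟩
  have hu : IsConnected (E l ∪ K ∪ F m) :=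
    (hEc.union ⟨z, hzE, hz⟩ hKc).union ⟨w, Or.inr hw, hwF⟩ hFc
  refine (subset_union_left.trans subset_union_left).trans (hgap _
    (union_subset (union_subset hED hKD) hFD) hu ⟨w, Or.inr hwF, hmk hwF⟩ ⟨p, ?_⟩)
  have hzp := hp hz
  have hwp := hp hw
  have hzx := hl l le_rfl hzE
  have hwx := hm hwF
  rw [mem_ball] at hzp hwp hzx hwx
  rintro q ((hq | hq) | hq)
  · have := hl l le_rfl hq
    rw [mem_ball] at this ⊢
    linarith [dist_triangle4 q x z p, dist_comm z x]
  · have := hp hq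
    rw [mem_ball] at this ⊢
    linarith
  · have := hm hq
    rw [mem_ball] at this ⊢
    linarith [dist_triangle4 q x' w p, dist_comm w x']

lemma comp_exists {X : Type*} [MetricSpace X] (hX : AssumptionsA X) {D : Set X}
    (hDo : IsOpen D) (hDfc : FinitelyConnectedAtBoundary D) {x : X} (hx : x ∈ frontier D)
    (V : Ultrafilter X) (hV : (V : Filter X) ≤ 𝓝 x) (hVD : D ∈ V) (r : ℝ) (hr : 0 < r) :
    ∃ (C : Set X) (ρ : ℝ), C ⊆ D ∧ C ⊆ ball x r ∧ IsConnected C ∧ C ∈ V ∧ 0 < ρ ∧ ρ ≤ r / 2 ∧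
      ∀ z ∈ D, z ∈ frontier C → 3 * ρ ≤ dist z x := by
  obtain ⟨U, hUo, -, hxU, hUb, hfin⟩ := hDfc x hx r hr
  have hmem : U ∩ D ∈ V := Filter.inter_mem (hV (hUo.mem_nhds hxU)) hVD
  have hcov : ⋃₀ {C : Set X | ∃ y ∈ U ∩ D, C = connectedComponentIn (U ∩ D) y} ∈ V := by
    refine Filter.mem_of_superset hmem fun y hy => ?_
    exact ⟨_, ⟨y, hy, rfl⟩, mem_connectedComponentIn hy⟩
  obtain ⟨C, ⟨y, hy, rfl⟩, hCV⟩ := (Ultrafilter.finite_sUnion_mem_iff hfin).1 hcov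
  obtain ⟨δ, hδ, hδU⟩ := Metric.isOpen_iff.1 hUo x hxU
  have hsub := connectedComponentIn_subset (U ∩ D) y
  refine ⟨_, min (r / 2) (δ / 3), hsub.trans inter_subset_right,
    (hsub.trans inter_subset_left).trans hUb, isConnected_connectedComponentIn_iff.2 hy, hCV,
    by positivity, min_le_left _ _, ?_⟩
  intro z hzD hz
  by_contra hlt
  push Not at hlt
  have hzU : z ∈ U ∩ D := ⟨hδU (by
    rw [mem_ball]
    have := min_le_right (r / 2) (δ / 3)
    linarith), hzD⟩
  have hloc := RJ.local hX (hUo.inter hDo) hzU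
  obtain ⟨w, hwC, hwz⟩ : ∃ w ∈ connectedComponentIn (U ∩ D) y, RJ (U ∩ D) z w := by
    obtain ⟨w, h1, h2⟩ := mem_closure_iff_nhds.1 hz.1 _ hloc
    exact ⟨w, h2, h1⟩
  obtain ⟨K, hK, hKc, hzK, hwK⟩ := hwz.connected
  have hKw := hKc.isPreconnected.subset_connectedComponentIn hwK hK
  have hzw := hKw hzK
  have e1 := connectedComponentIn_eq hwC
  have e2 := connectedComponentIn_eq hzw
  apply hz.2
  rw [mem_interior_iff_mem_nhds]
  filter_upwards [hloc] with b hb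
  obtain ⟨K', hK', hKc', hzK', hbK'⟩ := hb.connected
  rw [e1, e2]
  exact hKc'.isPreconnected.subset_connectedComponentIn hzK' hK' hbK'

lemma chain_exists {X : Type*} [MetricSpace X] (hX : AssumptionsA X) {D : Set X}
    (hDo : IsOpen D) (hDne : D.Nonempty) (hDfc : FinitelyConnectedAtBoundary D) {x : X}
    (hx : x ∈ frontier D)
    (V : Ultrafilter X) (hV : (V : Filter X) ≤ 𝓝 x) (hVD : D ∈ V) :
    ∃ E : ℕ → Set X, IsSingletonPrimeChain D E ∧ ∀ k, E k ∈ V := by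
  have key := comp_exists hX hDo hDfc hx V hV hVD
  choose! C ρ hCD hCb hCc hCV hρ0 hρr hfr using key
  obtain ⟨d, hd⟩ := hDne
  have hxD : x ∉ D := by rw [hDo.frontier_eq] at hx; exact hx.2
  have hdx : 0 < dist d x := dist_pos.2 (fun h => hxD (h ▸ hd))
  set R : ℕ → ℝ := fun k => ρ^[k] (dist d x) with hR
  have hRs : ∀ k, R (k + 1) = ρ (R k) := fun k => Function.iterate_succ_apply' _ _ _
  have hR0 : ∀ k, 0 < R k := by
    intro k
    induction k with
    | zero => exact hdx
    | succ k ih => rw [hRs]; exact hρ0 _ ih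
  have hRle : ∀ k, R k ≤ dist d x * (1/2) ^ k := by
    intro k
    induction k with
    | zero => simp [hR]
    | succ k ih => rw [hRs, pow_succ]; linarith [hρr _ (hR0 k)]
  have hRt : ∀ ε > 0, ∃ k, R k < ε := by
    intro ε hε
    obtain ⟨n, hn⟩ := exists_pow_lt_of_lt_one (show 0 < ε / dist d x by positivity)
      (show (1/2 : ℝ) < 1 by norm_num)
    refine ⟨n, (hRle n).trans_lt ?_⟩
    rwa [lt_div_iff₀ hdx, mul_comm] at hn
  have hRd : ∀ k, R k ≤ dist d x := fun k => (hRle k).trans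
    (mul_le_of_le_one_right hdx.le (pow_le_one₀ (by norm_num) (by norm_num)))
  have hxcl : ∀ k, x ∈ closure (C (R k)) := fun k =>
    mem_closure_iff_ultrafilter.2 ⟨V, hCV _ (hR0 k), hV⟩
  have hclb : ∀ k, closure (C (R k)) ⊆ closedBall x (R k) := fun k =>
    (closure_mono (hCb _ (hR0 k))).trans closure_ball_subset_closedBall
  have himp : impression (fun k => C (R k)) = {x} := by
    refine Subset.antisymm (fun z hz => ?_) (by simpa [impression] using hxcl)
    by_contra hzx
    obtain ⟨k, hk⟩ := hRt (dist z x) (dist_pos.2 hzx)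
    have := hclb k (mem_iInter.1 hz k)
    rw [mem_closedBall] at this
    linarith
  have hch : IsChainIn D (fun k => C (R k)) := by
    refine ⟨fun k => ⟨isBounded_ball.subset (hCb _ (hR0 k)), hCc _ (hR0 k), hCD _ (hR0 k), ?_,
      x, hxcl k, hx⟩, fun k => ?_, fun k => ?_, ?_⟩
    · intro h
      have : d ∈ C (R k) := h.symm.subset hd
      have := hCb _ (hR0 k) this
      rw [mem_ball] at this
      linarith [hRd k]
    · by_contra hn
      have hne : (C (R (k + 1)) ∩ C (R k)).Nonempty :=
        V.nonempty_of_mem (Filter.inter_mem (hCV _ (hR0 _)) (hCV _ (hR0 _)))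
      obtain ⟨z, hz, hz'⟩ := aux_frontier_s5 (hCc _ (hR0 (k + 1))).isPreconnected hne hn
      have h1 := hfr _ (hR0 k) z (hCD _ (hR0 _) hz) hz'
      have h2 := hCb _ (hR0 (k + 1)) hz
      rw [mem_ball] at h2
      rw [← hRs] at h1
      linarith [hR0 (k + 1)]
    · refine lt_of_lt_of_le (ENNReal.ofReal_pos.2 (hR0 (k + 1))) (le_iInf₂ ?_)
      rintro K ⟨hKD, -, ⟨u, huK, huD, hu⟩, ⟨v, hvK, hvD, hv⟩⟩
      refine le_trans ?_ (Metric.edist_le_ediam_of_mem huK hvK)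
      rw [edist_dist]
      apply ENNReal.ofReal_le_ofReal
      have h1 := hfr _ (hR0 k) v hvD hv
      have h2 := hclb (k + 1) hu.1
      rw [mem_closedBall] at h2
      rw [← hRs] at h1
      linarith [hR0 (k + 1), dist_triangle_left v x u]
    · change impression _ ⊆ _
      rw [himp]
      simpa using hx
  refine ⟨fun k => C (R k), ⟨⟨hch, ?_⟩, x, himp⟩, fun k => hCV _ (hR0 k)⟩
  intro F hF hdiv k
  obtain ⟨ε, hε, hgap⟩ := chain_gap hF k
  obtain ⟨l, hl⟩ := hRt ε hε
  obtain ⟨m, hm⟩ := hdiv l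
  have ha : Antitone F := antitone_nat_of_succ_le hF.2.1
  refine ⟨l, hgap _ (hCD _ (hR0 l)) (hCc _ (hR0 l)) ?_
    ⟨x, (hCb _ (hR0 l)).trans (ball_subset_ball hl.le)⟩⟩
  obtain ⟨z, hz⟩ := (hF.1 (max m (k + 1))).2.1.nonempty
  exact ⟨z, hm (ha (le_max_left _ _) hz), ha (le_max_right _ _) hz⟩

/-- for `f ∈ F(D, Ω)` with `D` finitely connected at the boundary and `Ω`
locally connected at the boundary, the map `Φ : ∂_P^S D → ∂Ω`, `Φ([E_k]) := x` where
`{x} = I[f⁻¹(E_k)]`, is well defined and bijective.  (Here `[E_k] ↦ Φ([E_k])` is encoded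
at the level of representative chains: `Φ` is constant on equivalence classes, equivalence
is detected by `Φ`, and `Φ` is onto `∂Ω`.) -/
theorem statement_5 {X Y : Type*} [MetricSpace X] [MetricSpace Y]
    (hX : AssumptionsA X) (hY : AssumptionsA Y)
    (D : Set X) (hDdom : IsDomainIn D) (hDbdd : Bornology.IsBounded D)
    (hDne : D ≠ Set.univ) (hDfc : FinitelyConnectedAtBoundary D)
    (Ω : Set Y) (hΩdom : IsDomainIn Ω) (hΩbdd : Bornology.IsBounded Ω)
    (hΩne : Ω ≠ Set.univ) (hΩlc : LocallyConnectedAtBoundary Ω)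
    (f : X → Y) (g : Y → X) (hf : ClassF D Ω f g) :
    ∃ Φ : (ℕ → Set X) → Y,
      (∀ E : ℕ → Set X, IsSingletonPrimeChain D E →
        Φ E ∈ frontier Ω ∧ impression (fun k => f '' E k) = {Φ E}) ∧
      (∀ E F : ℕ → Set X, IsSingletonPrimeChain D E → IsSingletonPrimeChain D F →
        (ChainEquiv E F ↔ Φ E = Φ F)) ∧
      (∀ y ∈ frontier Ω, ∃ E : ℕ → Set X, IsSingletonPrimeChain D E ∧ Φ E = y) := by
  have hDo := hDdom.1
  have hΩo := hΩdom.1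
  obtain ⟨y₀, -⟩ := hΩdom.2.nonempty
  have hex : ∀ E : ℕ → Set X, ∃ y, IsSingletonPrimeChain D E →
      y ∈ frontier Ω ∧ impression (fun k => f '' E k) = {y} := by
    intro E
    by_cases hE : IsSingletonPrimeChain D E
    · obtain ⟨hE1, x, hx⟩ := hE
      obtain ⟨y, hy⟩ := img_singleton hX hY D hDo Ω hΩo hΩbdd hΩlc f g hf E hE1.1 hx
      exact ⟨y, fun _ => hy⟩
    · exact ⟨y₀, fun h => absurd h hE⟩
  choose Φ hΦ using hex
  refine ⟨Φ, hΦ, fun E F hE hF => ⟨fun h => ?_, fun h => ?_⟩, fun y hy => ?_⟩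
  · have sub : impression (fun k => f '' E k) ⊆ impression (fun k => f '' F k) := by
      refine fun z hz => mem_iInter.2 fun k => ?_
      obtain ⟨l, hl⟩ := h.1 k
      exact closure_mono (image_mono hl) (mem_iInter.1 hz l)
    rw [(hΦ E hE).2, (hΦ F hF).2] at sub
    exact sub rfl
  · have hy := (hΦ E hE).1
    have h1 : Φ E ∈ impression (fun k => f '' E k) := by rw [(hΦ E hE).2]; rfl
    have h2 : Φ E ∈ impression (fun k => f '' F k) := by rw [(hΦ F hF).2, h]; rfl
    obtain ⟨⟨hE1, -⟩, x, hx⟩ := hE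
    obtain ⟨⟨hF1, -⟩, x', hx'⟩ := hF
    exact ⟨img_inj hX hY D hDo Ω hΩo hΩlc f g hf E F hE1 hx hF1 hx' hy h1 h2,
      img_inj hX hY D hDo Ω hΩo hΩlc f g hf F E hF1 hx' hE1 hx hy h2 h1⟩
  · obtain ⟨⟨hfc, hgc, hfm, hgm, hgf, hfg⟩, hcl⟩ := id hf
    have hyc : y ∈ closure Ω ∧ y ∉ Ω := by rwa [hΩo.frontier_eq] at hy
    obtain ⟨W, hWΩ, hWy⟩ := mem_closure_iff_ultrafilter.1 hyc.1
    have hVD : D ∈ W.map g := by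
      rw [Ultrafilter.mem_map]
      exact Filter.mem_of_superset hWΩ hgm
    obtain ⟨x, hxD, hVx⟩ := (aux_compact hX hDbdd).ultrafilter_le_nhds (W.map g)
      (Filter.le_principal_iff.2 (Filter.mem_of_superset hVD subset_closure))
    have hxn : x ∉ D := by
      intro hxD'
      have hc : Tendsto f (𝓝 x) (𝓝 (f x)) := hfc.continuousAt (hDo.mem_nhds hxD')
      have h1 : Tendsto (fun z => f (g z)) (W : Filter Y) (𝓝 (f x)) := hc.comp hVx
      have h2 : Tendsto (fun z => f (g z)) (W : Filter Y) (𝓝 y) := by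
        refine Tendsto.congr' ?_ (tendsto_id.mono_left hWy)
        filter_upwards [hWΩ] with z hz using (hfg z hz).symm
      have := tendsto_nhds_unique h1 h2
      exact hyc.2 (this ▸ hfm hxD')
    have hxf : x ∈ frontier D := by rw [hDo.frontier_eq]; exact ⟨hxD, hxn⟩
    obtain ⟨E, hE, hEV⟩ := chain_exists hX hDo hDdom.2.nonempty hDfc hxf _ hVx hVD
    refine ⟨E, hE, ?_⟩
    have : y ∈ impression (fun k => f '' E k) := by
      refine mem_iInter.2 fun k => mem_closure_iff_ultrafilter.2 ⟨W, ?_, hWy⟩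
      filter_upwards [hWΩ, Ultrafilter.mem_map.1 (hEV k)] with z hz hz'
      exact ⟨g z, hz', hfg z hz⟩
    rw [(hΦ E hE).2] at this
    exact this.symm
end
end
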